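/- Regard 𝓕 = 𝓕[k,N] as a function of z₁ = x₁ with the other variables fixed generically. Then 𝓕(z₁+1) = Q₁^{−1} 𝓕(z₁) Q₁ and 𝓕(z₁+τ) = exp(2πi kℏ/M) · Λ₁^{−1} 𝓕(z₁) Λ₁, where Q₁ = Q ⊗ 1_M^{⊗(2N−1)} and Λ₁ = Λ ⊗ 1_M^{⊗(2N−1)}. -/

import Mathlib

open Complex Matrix Finset Filter
open scoped BigOperators Kronecker Topology

noncomputable section

/-- The lattice `ℤ + τℤ ⊂ ℂ`. -/
def lat (τ : ℂ) : Set ℂ := {w : ℂ | ∃ m n : ℤ, w = (m : ℂ) + (n : ℂ) * τ}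

/-- The odd theta function `ϑ(z|τ)`. -/
def theta (τ z : ℂ) : ℂ :=
  -∑' k : ℤ, Complex.exp ((Real.pi : ℂ) * Complex.I * τ * ((k : ℂ) + 1/2)^2
      + 2 * (Real.pi : ℂ) * Complex.I * (z + 1/2) * ((k : ℂ) + 1/2))

/-- The Kronecker elliptic function `φ(z,u) = ϑ'(0)ϑ(z+u)/(ϑ(z)ϑ(u))`. -/
def phi (τ z u : ℂ) : ℂ :=
  deriv (theta τ) 0 * theta τ (z + u) / (theta τ z * theta τ u)

/-- The matrix `Q`, `Q_{kl} = δ_{kl} exp(2πik/M)`. -/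
def Qmat (M : ℕ) : Matrix (Fin M) (Fin M) ℂ :=
  Matrix.diagonal fun k => Complex.exp (2 * (Real.pi : ℂ) * Complex.I * ((k : ℕ) + 1) / M)

/-- The matrix `Λ`, `Λ_{kl} = δ_{k−l+1 ≡ 0 (mod M)}`. -/
def Lmat (M : ℕ) : Matrix (Fin M) (Fin M) ℂ :=
  Matrix.of fun k l => if ((k : ℤ) - (l : ℤ) + 1) % (M : ℤ) = 0 then (1 : ℂ) else 0

/-- `T_α = exp(πiα₁α₂/M) Q^{α₁} Λ^{α₂}`. -/
def Tmat (M : ℕ) (a : ZMod M × ZMod M) : Matrix (Fin M) (Fin M) ℂ :=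
  Complex.exp ((Real.pi : ℂ) * Complex.I * (a.1.val : ℂ) * (a.2.val : ℂ) / M) •
    (Qmat M ^ a.1.val * Lmat M ^ a.2.val)

/-- `ω_α = (α₁ + α₂ τ)/M`. -/
def omegaA (M : ℕ) (τ : ℂ) (a : ZMod M × ZMod M) : ℂ :=
  ((a.1.val : ℂ) + (a.2.val : ℂ) * τ) / M

/-- The Baxter–Belavin R-matrix on `ℂ^M ⊗ ℂ^M`. -/
def Rmat (M : ℕ) [NeZero M] (τ ℏ x : ℂ) : Matrix (Fin M × Fin M) (Fin M × Fin M) ℂ :=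
  (M : ℂ)⁻¹ • ∑ a : ZMod M × ZMod M,
    (Complex.exp (2 * (Real.pi : ℂ) * Complex.I * (a.2.val : ℂ) * x / M) *
      phi τ x (ℏ / M + omegaA M τ a)) • (Tmat M a ⊗ₖ Tmat M (-a))

/-- `R^ℏ_{ij}(x)` acting in the `i`-th and `j`-th tensor factors of `(ℂ^M)^{⊗n}`. -/
def Rop (M : ℕ) [NeZero M] (τ ℏ : ℂ) {n : ℕ} (i j : Fin n) (x : ℂ) :
    Matrix (Fin n → Fin M) (Fin n → Fin M) ℂ :=
  Matrix.of fun f g =>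
    Rmat M τ ℏ x (f i, f j) (g i, g j) *
      ∏ k ∈ univ.filter (fun k => k ≠ i ∧ k ≠ j), (if f k = g k then (1 : ℂ) else 0)

/-- `R^ℏ_{ij} = R^ℏ_{ij}(z_i − z_j)`. -/
def Rz (M : ℕ) [NeZero M] (τ ℏ : ℂ) {n : ℕ} (z : Fin n → ℂ) (i j : Fin n) :
    Matrix (Fin n → Fin M) (Fin n → Fin M) ℂ :=
  Rop M τ ℏ i j (z i - z j)

/-- Ordered product over a finite set of indices, taken in increasing order. -/
def oprodAsc {n : ℕ} {α : Type*} [Monoid α] (s : Finset (Fin n)) (A : Fin n → α) : α :=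
  ((s.sort (· ≤ ·)).map A).prod

/-- Ordered product over a finite set of indices, taken in decreasing order. -/
def oprodDesc {n : ℕ} {α : Type*} [Monoid α] (s : Finset (Fin n)) (A : Fin n → α) : α :=
  (((s.sort (· ≤ ·)).reverse).map A).prod

/-- `𝓡^ℏ_{I,J}`: product over `i ∈ I` in decreasing order of `→∏_{j∈J, j>i} R^ℏ_{ij}`. -/
def calR (M : ℕ) [NeZero M] (τ ℏ : ℂ) {n : ℕ} (z : Fin n → ℂ) (I J : Finset (Fin n)) :
    Matrix (Fin n → Fin M) (Fin n → Fin M) ℂ :=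
  oprodDesc I fun i => oprodAsc (J.filter fun j => i < j) fun j => Rz M τ ℏ z i j

/-- `𝓡'^ℏ_{I,J}`: product over `i ∈ I` in decreasing order of `→∏_{j∈J, j<i} R^ℏ_{ij}`. -/
def calR' (M : ℕ) [NeZero M] (τ ℏ : ℂ) {n : ℕ} (z : Fin n → ℂ) (I J : Finset (Fin n)) :
    Matrix (Fin n → Fin M) (Fin n → Fin M) ℂ :=
  oprodDesc I fun i => oprodAsc (J.filter fun j => j < i) fun j => Rz M τ ℏ z i j

/-- `𝒴^ℏ_{I,J} = (→∏_{j∈J} R^ℏ_{i₁,j}) ⋯ (→∏_{j∈J} R^ℏ_{i_p,j})`, `i₁<⋯<i_p` the elements of `I`. -/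
def calY (M : ℕ) [NeZero M] (τ ℏ : ℂ) {n : ℕ} (z : Fin n → ℂ) (I J : Finset (Fin n)) :
    Matrix (Fin n → Fin M) (Fin n → Fin M) ℂ :=
  oprodAsc I fun i => oprodAsc J fun j => Rz M τ ℏ z i j

/-- `𝒩₁ = {1,…,N}` inside the index set of cardinality `2N`. -/
def N1set (N : ℕ) : Finset (Fin (2*N)) := univ.filter fun i => (i : ℕ) < N

/-- `𝒩₂ = {N+1,…,2N}` inside the index set of cardinality `2N`. -/
def N2set (N : ℕ) : Finset (Fin (2*N)) := univ.filter fun i => N ≤ (i : ℕ)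

/-- `z_i = x_i` for `i ∈ 𝒩₁`, `z_{N+j} = y_j` for `j ∈ 𝒩₁`. -/
def zfun (N : ℕ) (x y : Fin N → ℂ) (i : Fin (2*N)) : ℂ :=
  if h : (i : ℕ) < N then x ⟨(i : ℕ), h⟩
  else y ⟨(i : ℕ) - N, by have := i.isLt; omega⟩

/-- The inclusion `𝒩₁ ∋ a ↪ {1,…,2N}`. -/
def finN1 {N : ℕ} (a : Fin N) : Fin (2*N) := ⟨(a : ℕ), by have := a.isLt; omega⟩

/-- The inclusion `𝒩₂ ∋ b ↪ {1,…,2N}` (`b ↦ N + b`). -/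
def finN2 {N : ℕ} (b : Fin N) : Fin (2*N) := ⟨N + (b : ℕ), by have := b.isLt; omega⟩

/-- `𝓕₁[k,N] = ∑_{I⊂𝒩₁,|I|=k} 𝓡^ℏ_{I,Iᶜ} 𝒴^ℏ_{𝒩₂,I} 𝓡'^ℏ_{I,Iᶜ}`. -/
def F1 (M : ℕ) [NeZero M] (τ ℏ : ℂ) (N k : ℕ) (x y : Fin N → ℂ) :
    Matrix (Fin (2*N) → Fin M) (Fin (2*N) → Fin M) ℂ :=
  ∑ I ∈ (N1set N).powersetCard k,
    calR M τ ℏ (zfun N x y) I (N1set N \ I) *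
      calY M τ ℏ (zfun N x y) (N2set N) I *
        calR' M τ ℏ (zfun N x y) I (N1set N \ I)

/-- `𝓕₂[k,N]`, the second sum in the Theorem. -/
def F2 (M : ℕ) [NeZero M] (τ ℏ : ℂ) (N k : ℕ) (x y : Fin N → ℂ) :
    Matrix (Fin (2*N) → Fin M) (Fin (2*N) → Fin M) ℂ :=
  ∑ J ∈ (N2set N).powersetCard k,
    (oprodDesc J fun j => oprodAsc ((N2set N).filter fun l => j < l ∧ l ∉ J) fun l =>
        Rz M τ ℏ (zfun N x y) l j) *
      (oprodAsc J fun j => oprodAsc (N1set N) fun i => Rz M τ ℏ (zfun N x y) j i) *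
        (oprodDesc J fun j => oprodAsc ((N2set N).filter fun m => m < j ∧ m ∉ J) fun m =>
          Rz M τ ℏ (zfun N x y) m j)


/-- The permutation `P_{ab}` of the `a`-th and `b`-th tensor factors of `(ℂ^M)^{⊗n}`. -/
def Pswap (M : ℕ) {n : ℕ} (a b : Fin n) : Matrix (Fin n → Fin M) (Fin n → Fin M) ℂ :=
  Matrix.of fun f g => if f = g ∘ Equiv.swap a b then (1 : ℂ) else 0

/-- An operator on `(ℂ^M)^{⊗m}`, acting in the tensor factors of `(ℂ^M)^{⊗n}` selected
by the embedding `e` (and as identity in the remaining factors). -/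
def liftOp {M m n : ℕ} (e : Fin m → Fin n)
    (A : Matrix (Fin m → Fin M) (Fin m → Fin M) ℂ) :
    Matrix (Fin n → Fin M) (Fin n → Fin M) ℂ :=
  Matrix.of fun f g =>
    A (f ∘ e) (g ∘ e) *
      ∏ k ∈ univ.filter (fun k => ∀ i, e i ≠ k), (if f k = g k then (1 : ℂ) else 0)

/-- The order-preserving identification of `{1,…,2(N−1)}` with
`({1,…,N}∖{a}) ∪ ({N+1,…,2N}∖{N+b})` inside `{1,…,2N}`. -/
def embAB (N : ℕ) (a b : Fin N) (i : Fin (2*(N-1))) : Fin (2*N) :=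
  if h : (i : ℕ) < N - 1 then
    (if (i : ℕ) < (a : ℕ) then ⟨(i : ℕ), by have := i.isLt; omega⟩
     else ⟨(i : ℕ) + 1, by have := i.isLt; omega⟩)
  else
    (if (i : ℕ) - (N - 1) < (b : ℕ) then ⟨N + ((i : ℕ) - (N - 1)), by have := i.isLt; omega⟩
     else ⟨N + ((i : ℕ) - (N - 1)) + 1, by have := i.isLt; omega⟩)

/-- Remove the `a`-th entry from a tuple of `N` complex numbers. -/
def removeAt {N : ℕ} (a : Fin N) (x : Fin N → ℂ) (i : Fin (N-1)) : ℂ :=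
  if h : (i : ℕ) < (a : ℕ) then x ⟨(i : ℕ), by have := i.isLt; have := a.isLt; omega⟩
  else x ⟨(i : ℕ) + 1, by have := i.isLt; omega⟩

/-- `A` acting in the `i`-th tensor factor of `(ℂ^M)^{⊗n}` (identity elsewhere),
e.g. `Q₁ = Q ⊗ 1_M^{⊗(n−1)}`. -/
def opAt (M : ℕ) {n : ℕ} (A : Matrix (Fin M) (Fin M) ℂ) (i : Fin n) :
    Matrix (Fin n → Fin M) (Fin n → Fin M) ℂ :=
  Matrix.of fun f g =>
    A (f i) (g i) * ∏ k ∈ univ.filter (· ≠ i), (if f k = g k then (1 : ℂ) else 0)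

/-- The flip operator `P(v ⊗ w) = w ⊗ v` on `ℂ^M ⊗ ℂ^M`. -/
def flipP (M : ℕ) : Matrix (Fin M × Fin M) (Fin M × Fin M) ℂ :=
  Matrix.of fun p q => if p.1 = q.2 ∧ p.2 = q.1 then (1 : ℂ) else 0

/-! Conjugation by `Q` or `Λ` multiplies every `T_α` by the value of a character of `ℤ_M × ℤ_M`, and
these characters are exactly the quasi-period factors of the coefficients of the R-matrix under
`x ↦ x + 1` and `x ↦ x + τ`, up to an extra `e⁻¹ = exp(−2πiℏ/M)` in the second case. Hence shifting
`z_l` and conjugating the `l`-th tensor factor multiplies `R_ij` by `e^{q_j − q_i}`, where `q` is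
the charge concentrated at `l`. For arbitrary charges the exponents of all the factors in any
summand of `𝓕₁[k,N]` or `𝓕₂[k,N]` add up to `k (∑_{𝒩₁} q − ∑_{𝒩₂} q)`: the charge of the chosen
subset drops out because `|𝒩₁| = |𝒩₂| = N`. For `l ∈ 𝒩₁` this is `k`. -/

open scoped Real

section TensorPower

variable {ι R : Type*} {m : ι → Type*} [Fintype ι] [CommSemiring R]
  [∀ k, Fintype (m k)] [∀ k, DecidableEq (m k)]

/-- The Kronecker product `⨂ₖ Aₖ` of a finite family of square matrices, as a homomorphism from
families with the pointwise product. -/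
def piKroneckerHom [DecidableEq ι] :
    (∀ k, Matrix (m k) (m k) R) →* Matrix (∀ k, m k) (∀ k, m k) R where
  toFun A := Matrix.of fun f g => ∏ k, A k (f k) (g k)
  map_one' := by
    ext f g
    simp [Matrix.one_apply, Finset.prod_ite_zero, funext_iff]
  map_mul' A B := by
    ext f g
    simp [Matrix.mul_apply, Fintype.prod_sum, Finset.prod_mul_distrib]

lemma piKroneckerHom_apply [DecidableEq ι] (A : ∀ k, Matrix (m k) (m k) R) (f g : ∀ k, m k) :
    piKroneckerHom A f g = ∏ k, A k (f k) (g k) := rfl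

variable {M n : ℕ} {A B : Matrix (Fin M) (Fin M) ℂ} {i j : Fin n}

lemma opAt_eq_piKroneckerHom (A : Matrix (Fin M) (Fin M) ℂ) (i : Fin n) :
    opAt M A i = piKroneckerHom (Pi.mulSingle i A) := by
  ext f g
  rw [piKroneckerHom_apply, ← Finset.mul_prod_erase _ _ (Finset.mem_univ i), Pi.mulSingle_eq_same,
    opAt, Matrix.of_apply, Finset.filter_ne']
  refine congrArg _ (Finset.prod_congr rfl fun k hk => ?_)
  rw [Pi.mulSingle_eq_of_ne (Finset.ne_of_mem_erase hk), Matrix.one_apply]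

lemma isUnit_opAt (hA : IsUnit A) (i : Fin n) : IsUnit (opAt M A i) := by
  rw [opAt_eq_piKroneckerHom]
  exact (hA.map (MonoidHom.mulSingle (fun _ : Fin n => Matrix (Fin M) (Fin M) ℂ) i)).map
    (piKroneckerHom (m := fun _ : Fin n => Fin M))

lemma opAt_mul_opAt (A B : Matrix (Fin M) (Fin M) ℂ) (i : Fin n) :
    opAt M A i * opAt M B i = opAt M (A * B) i := by
  simp only [opAt_eq_piKroneckerHom, Pi.mulSingle_mul, map_mul]

lemma opAt_commute (A B : Matrix (Fin M) (Fin M) ℂ) (hij : i ≠ j) :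
    Commute (opAt M A i) (opAt M B j) := by
  simp only [opAt_eq_piKroneckerHom]
  exact (Pi.mulSingle_commute (f := fun _ : Fin n => Matrix (Fin M) (Fin M) ℂ) hij A B).map
    piKroneckerHom

lemma opAt_smul (c : ℂ) (A : Matrix (Fin M) (Fin M) ℂ) (i : Fin n) :
    opAt M (c • A) i = c • opAt M A i := by
  ext f g
  simp [opAt, mul_assoc]

lemma semiconjBy_opAt {U : Matrix (Fin M) (Fin M) ℂ} {c : ℂ} (h : SemiconjBy U A (c • A))
    (l i : Fin n) :
    SemiconjBy (opAt M U l) (opAt M A i) ((if i = l then c else 1) • opAt M A i) := by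
  split_ifs with hil
  · subst hil
    rw [SemiconjBy, opAt_mul_opAt, ← opAt_smul, opAt_mul_opAt, h.eq]
  · rw [one_smul]
    exact opAt_commute U A (Ne.symm hil)

lemma opAt_mul_opAt_apply (hij : i ≠ j) (A B : Matrix (Fin M) (Fin M) ℂ) (f g : Fin n → Fin M) :
    (opAt M A i * opAt M B j) f g = A (f i) (g i) * B (f j) (g j) *
      ∏ k ∈ univ.filter (fun k => k ≠ i ∧ k ≠ j), if f k = g k then (1 : ℂ) else 0 := by
  have hfilter : univ.filter (fun k => k ≠ i ∧ k ≠ j) = (univ.erase i).erase j := by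
    ext k; simp [and_comm]
  rw [opAt_eq_piKroneckerHom, opAt_eq_piKroneckerHom, ← map_mul, piKroneckerHom_apply, hfilter,
    ← Finset.mul_prod_erase _ _ (Finset.mem_univ i),
    ← Finset.mul_prod_erase _ _ (Finset.mem_erase.2 ⟨hij.symm, Finset.mem_univ j⟩), ← mul_assoc]
  simp only [Pi.mul_apply, Pi.mulSingle_eq_same, Pi.mulSingle_eq_of_ne hij,
    Pi.mulSingle_eq_of_ne hij.symm, mul_one, one_mul]
  refine congrArg _ (Finset.prod_congr rfl fun k hk => ?_)
  obtain ⟨hkj, hki, -⟩ := by simpa only [Finset.mem_erase] using hk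
  rw [Pi.mulSingle_eq_of_ne hki, Pi.mulSingle_eq_of_ne hkj, one_mul, Matrix.one_apply]

end TensorPower

section Theta

lemma theta_eq_jacobiTheta₂ (τ z : ℂ) :
    theta τ z = -(exp (π * I * (τ / 4 + z + 1 / 2)) * jacobiTheta₂ (z + 1 / 2 + τ / 2) τ) := by
  rw [theta, jacobiTheta₂, ← tsum_mul_left]
  refine congrArg _ (tsum_congr fun k => ?_)
  rw [jacobiTheta₂_term, ← exp_add]
  ring_nf

lemma theta_add_one (τ z : ℂ) : theta τ (z + 1) = -theta τ z := by
  have hexp : exp (π * I * (τ / 4 + (z + 1) + 1 / 2)) = -exp (π * I * (τ / 4 + z + 1 / 2)) := by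
    rw [← exp_add_pi_mul_I]
    ring_nf
  rw [theta_eq_jacobiTheta₂, theta_eq_jacobiTheta₂, hexp,
    show z + 1 + 1 / 2 + τ / 2 = z + 1 / 2 + τ / 2 + 1 by ring, jacobiTheta₂_add_left, neg_mul]

lemma theta_add_tau (τ z : ℂ) : theta τ (z + τ) = -exp (-(π * I * (τ + 2 * z))) * theta τ z := by
  have hexp : exp (π * I * (τ / 4 + (z + τ) + 1 / 2)) *
        exp (-π * I * (τ + 2 * (z + 1 / 2 + τ / 2))) =
      -(exp (-(π * I * (τ + 2 * z))) * exp (π * I * (τ / 4 + z + 1 / 2))) := by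
    rw [← exp_add, ← exp_add, ← exp_sub_pi_mul_I]
    ring_nf
  rw [theta_eq_jacobiTheta₂, theta_eq_jacobiTheta₂,
    show z + τ + 1 / 2 + τ / 2 = z + 1 / 2 + τ / 2 + τ by ring, jacobiTheta₂_add_left',
    ← mul_assoc, hexp]
  ring

lemma phi_add_one (τ z u : ℂ) : phi τ (z + 1) u = phi τ z u := by
  rw [phi, phi, add_right_comm, theta_add_one, theta_add_one, neg_mul, mul_neg, neg_div_neg_eq]

lemma phi_add_tau (τ z u : ℂ) : phi τ (z + τ) u = exp (-(2 * π * I * u)) * phi τ z u := by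
  have hexp : exp (-(π * I * (τ + 2 * (z + u)))) =
      exp (-(π * I * (τ + 2 * z))) * exp (-(2 * π * I * u)) := by
    rw [← exp_add]
    ring_nf
  rw [phi, phi, add_right_comm, theta_add_tau, theta_add_tau, hexp]
  field_simp [exp_ne_zero]

end Theta

section Heisenberg

variable (M : ℕ)

lemma isUnit_Qmat : IsUnit (Qmat M) := by
  simp [Qmat, Matrix.isUnit_diagonal, Pi.isUnit_iff]

variable [NeZero M]

lemma stdAddChar_natCast (b : ℕ) :
    ZMod.stdAddChar (b : ZMod M) = exp (2 * π * I * b / M) := by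
  exact_mod_cast ZMod.stdAddChar_coe (N := M) (b : ℤ)

lemma Qmat_eq_diagonal :
    Qmat M = Matrix.diagonal fun k : Fin M => ZMod.stdAddChar (((k : ℕ) + 1 : ℕ) : ZMod M) := by
  refine congrArg _ (funext fun k => ?_)
  rw [stdAddChar_natCast, Nat.cast_add_one]

lemma Lmat_eq_permMatrix : Lmat M = (Equiv.addRight (1 : Fin M)).permMatrix ℂ := by
  ext k l
  have hmod : ((k : ℤ) - l + 1) % M = 0 ↔ l = k + 1 := by
    rw [show (k : ℤ) - l + 1 = ((k + 1 : ℕ) : ℤ) - (l : ℕ) by push_cast; ring,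
      ← Int.dvd_iff_emod_eq_zero, ← Nat.modEq_iff_dvd, Fin.ext_iff, Fin.val_add, Fin.val_one',
      Nat.add_mod_mod, Nat.ModEq, Nat.mod_eq_of_lt l.isLt]
  rw [Lmat, Matrix.of_apply, Equiv.Perm.permMatrix, PEquiv.toMatrix_apply]
  simp only [hmod, Equiv.toPEquiv_apply, Option.mem_some_iff, Equiv.coe_addRight, eq_comm]

lemma isUnit_Lmat : IsUnit (Lmat M) := by
  rw [Lmat_eq_permMatrix, Matrix.isUnit_iff_isUnit_det, Matrix.det_permutation]
  exact (Units.isUnit _).map (Int.castRingHom ℂ)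

lemma semiconjBy_Lmat_Qmat :
    SemiconjBy (Lmat M) (Qmat M) (ZMod.stdAddChar (1 : ZMod M) • Qmat M) := by
  rw [SemiconjBy, Lmat_eq_permMatrix, Qmat_eq_diagonal]
  ext k l
  rw [Matrix.mul_diagonal, smul_mul_assoc, Matrix.smul_apply, Matrix.diagonal_mul, smul_eq_mul,
    Equiv.Perm.permMatrix, PEquiv.toMatrix_apply]
  simp only [Equiv.toPEquiv_apply, Option.mem_some_iff, Equiv.coe_addRight]
  split_ifs with hkl
  · have hval : (((k + 1 : Fin M) : ℕ) : ZMod M) = (k : ℕ) + 1 := by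
      rw [Fin.val_add, Fin.val_one', Nat.add_mod_mod, ZMod.natCast_mod, Nat.cast_add_one]
    rw [← hkl, mul_one, one_mul, ← AddChar.map_add_eq_mul, Nat.cast_add_one, Nat.cast_add_one,
      hval, add_comm]
  · rw [mul_zero, mul_zero, zero_mul]

lemma semiconjBy_Qmat_Lmat :
    SemiconjBy (Qmat M) (Lmat M) (ZMod.stdAddChar (-1 : ZMod M) • Lmat M) := by
  rw [SemiconjBy, smul_mul_assoc, (semiconjBy_Lmat_Qmat M).eq, smul_mul_assoc, smul_smul,
    ← AddChar.map_add_eq_mul, neg_add_cancel, AddChar.map_zero_eq_one, one_smul]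

variable {M}

lemma semiconjBy_pow_val {A : Type*} [Semiring A] [Algebra ℂ A] {U X : A} {c : ZMod M}
    (h : SemiconjBy U X (ZMod.stdAddChar c • X)) (b : ZMod M) :
    SemiconjBy U (X ^ b.val) (ZMod.stdAddChar (b * c) • X ^ b.val) := by
  simpa only [smul_pow, ← AddChar.map_nsmul_eq_pow, nsmul_eq_mul, ZMod.natCast_zmod_val]
    using h.pow_right b.val

lemma semiconjBy_Lmat_Tmat (a : ZMod M × ZMod M) :
    SemiconjBy (Lmat M) (Tmat M a) (ZMod.stdAddChar a.1 • Tmat M a) := by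
  have h := (semiconjBy_pow_val (semiconjBy_Lmat_Qmat M) a.1).mul_right
    ((Commute.refl (Lmat M)).pow_right a.2.val)
  rw [mul_one, smul_mul_assoc] at h
  rw [Tmat, smul_comm]
  exact h.smul_right _

lemma semiconjBy_Qmat_Tmat (a : ZMod M × ZMod M) :
    SemiconjBy (Qmat M) (Tmat M a) (ZMod.stdAddChar (-a.2) • Tmat M a) := by
  have h := ((Commute.refl (Qmat M)).pow_right a.1.val).semiconjBy.mul_right
    (semiconjBy_pow_val (semiconjBy_Qmat_Lmat M) a.2)
  rw [mul_neg_one, mul_smul_comm] at h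
  rw [Tmat, smul_comm]
  exact h.smul_right _

end Heisenberg

section ScaledSemiconj

variable {G A : Type*} [Group G] [Monoid A] [MulAction G A] [IsScalarTower G A A]
  [SMulCommClass G A A] {U : A} {e : G}

lemma semiconjBy_mul_zpow_smul {X X' Y Y' : A} {m n : ℤ} (hX : SemiconjBy U X' (e ^ m • X))
    (hY : SemiconjBy U Y' (e ^ n • Y)) : SemiconjBy U (X' * Y') (e ^ (m + n) • (X * Y)) := by
  simpa only [smul_mul_smul_comm, _root_.zpow_add] using hX.mul_right hY

lemma semiconjBy_list_prod_zpow_smul {ι : Type*} {X X' : ι → A} {w : ι → ℤ} (L : List ι)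
    (h : ∀ i ∈ L, SemiconjBy U (X' i) (e ^ w i • X i)) :
    SemiconjBy U (L.map X').prod (e ^ (L.map w).sum • (L.map X).prod) := by
  induction L with
  | nil => simp
  | cons i L ih =>
    simp only [List.map_cons, List.prod_cons, List.sum_cons]
    exact semiconjBy_mul_zpow_smul (h i List.mem_cons_self)
      (ih fun j hj => h j (List.mem_cons_of_mem i hj))

variable {n : ℕ} {s : Finset (Fin n)} {X X' : Fin n → A} {w : Fin n → ℤ}

lemma semiconjBy_oprodAsc (h : ∀ i ∈ s, SemiconjBy U (X' i) (e ^ w i • X i)) :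
    SemiconjBy U (oprodAsc s X') (e ^ (∑ i ∈ s, w i) • oprodAsc s X) := by
  have hsum : ((s.sort (· ≤ ·)).map w).sum = ∑ i ∈ s, w i := by
    rw [← List.sum_toFinset w (s.sort_nodup _), sort_toFinset]
  rw [← hsum]
  exact semiconjBy_list_prod_zpow_smul _ fun i hi => h i ((Finset.mem_sort _).1 hi)

lemma semiconjBy_oprodDesc (h : ∀ i ∈ s, SemiconjBy U (X' i) (e ^ w i • X i)) :
    SemiconjBy U (oprodDesc s X') (e ^ (∑ i ∈ s, w i) • oprodDesc s X) := by
  have hsum : ((s.sort (· ≤ ·)).reverse.map w).sum = ∑ i ∈ s, w i := by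
    rw [← List.sum_toFinset w (List.nodup_reverse.2 (s.sort_nodup _)), List.toFinset_reverse,
      sort_toFinset]
  rw [← hsum]
  exact semiconjBy_list_prod_zpow_smul _ fun i hi =>
    h i ((Finset.mem_sort _).1 (List.mem_reverse.1 hi))

end ScaledSemiconj

lemma semiconjBy_sum_smul {ι K A : Type*} [Monoid K] [NonUnitalNonAssocSemiring A]
    [DistribMulAction K A] {U : A} {c : K} {X X' : ι → A} (s : Finset ι)
    (h : ∀ i ∈ s, SemiconjBy U (X' i) (c • X i)) :
    SemiconjBy U (∑ i ∈ s, X' i) (c • ∑ i ∈ s, X i) := by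
  rw [SemiconjBy, Finset.mul_sum, Finset.smul_sum, Finset.sum_mul]
  exact Finset.sum_congr rfl fun i hi => (h i hi).eq

section RMatrix

variable (M : ℕ) (τ ℏ : ℂ)

/-- The scalar `φ_α(x, ℏ/M + ω_α)` multiplying `T_α ⊗ T_{−α}` in `M R^ℏ(x)`. -/
def Rcoeff (a : ZMod M × ZMod M) (x : ℂ) : ℂ :=
  exp (2 * π * I * a.2.val * x / M) * phi τ x (ℏ / M + omegaA M τ a)

/-- A shift `s` of the spectral parameter that is compensated by conjugation with `U`: conjugating
by `U` multiplies each `T_α` by the character value `ψ α`, and the coefficients of the R-matrix are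
`s`-quasi-periodic with the opposite characters, up to the common factor `e⁻¹`. -/
structure IsQuasiPeriod (U : Matrix (Fin M) (Fin M) ℂ) (s : ℂ) (e : ℂˣ)
    (ψ : AddChar (ZMod M × ZMod M) ℂ) : Prop where
  isUnit : IsUnit U
  semiconjBy_Tmat (a : ZMod M × ZMod M) : SemiconjBy U (Tmat M a) (ψ a • Tmat M a)
  Rcoeff_add (a : ZMod M × ZMod M) (x : ℂ) :
    Rcoeff M τ ℏ a (x + s) = (e⁻¹ : ℂˣ) * ψ (-a) * Rcoeff M τ ℏ a x

variable [NeZero M]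

lemma Rop_eq_sum {n : ℕ} {i j : Fin n} (hij : i ≠ j) (x : ℂ) :
    Rop M τ ℏ i j x = (M : ℂ)⁻¹ • ∑ a : ZMod M × ZMod M,
      Rcoeff M τ ℏ a x • (opAt M (Tmat M a) i * opAt M (Tmat M (-a)) j) := by
  ext f g
  simp only [Rop, Rmat, Matrix.of_apply, Matrix.smul_apply, Matrix.sum_apply, smul_eq_mul,
    opAt_mul_opAt_apply hij, Matrix.kroneckerMap_apply, Rcoeff, Finset.sum_mul, mul_assoc]

lemma isQuasiPeriod_Qmat : IsQuasiPeriod M τ ℏ (Qmat M) 1 1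
    (ZMod.stdAddChar.compAddMonoidHom (-AddMonoidHom.snd (ZMod M) (ZMod M))) where
  isUnit := isUnit_Qmat M
  semiconjBy_Tmat := semiconjBy_Qmat_Tmat
  Rcoeff_add a x := by
    have hχ : ZMod.stdAddChar a.2 = exp (2 * π * I * a.2.val / M) := by
      rw [← stdAddChar_natCast, ZMod.natCast_zmod_val]
    have hexp : exp (2 * π * I * a.2.val * (x + 1) / M) =
        exp (2 * π * I * a.2.val / M) * exp (2 * π * I * a.2.val * x / M) := by
      rw [← exp_add]
      ring_nf
    rw [Rcoeff, Rcoeff, phi_add_one, hexp, inv_one, Units.val_one, one_mul, mul_assoc]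
    simp [-ZMod.natCast_val, hχ]

lemma isQuasiPeriod_Lmat : IsQuasiPeriod M τ ℏ (Lmat M) τ
    (Units.mk0 (exp (2 * π * I * ℏ / M)) (exp_ne_zero _))
    (ZMod.stdAddChar.compAddMonoidHom (AddMonoidHom.fst (ZMod M) (ZMod M))) where
  isUnit := isUnit_Lmat M
  semiconjBy_Tmat := semiconjBy_Lmat_Tmat
  Rcoeff_add a x := by
    have hχ : ZMod.stdAddChar a.1 = exp (2 * π * I * a.1.val / M) := by
      rw [← stdAddChar_natCast, ZMod.natCast_zmod_val]
    have hexp : exp (2 * π * I * a.2.val * (x + τ) / M) *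
          exp (-(2 * π * I * (ℏ / M + omegaA M τ a))) =
        exp (-(2 * π * I * ℏ / M)) * exp (-(2 * π * I * a.1.val / M)) *
          exp (2 * π * I * a.2.val * x / M) := by
      rw [omegaA, ← exp_add, ← exp_add, ← exp_add]
      ring_nf
    simp only [Rcoeff, phi_add_tau, ← mul_assoc, hexp]
    simp [-ZMod.natCast_val, AddChar.map_neg_eq_inv, hχ, exp_neg]

end RMatrix

section QuasiPeriod

variable {M : ℕ} {τ ℏ : ℂ} {U : Matrix (Fin M) (Fin M) ℂ} {s : ℂ} {e : ℂˣ}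
  {ψ : AddChar (ZMod M × ZMod M) ℂ} {n : ℕ} {i j : Fin n}

lemma IsQuasiPeriod.Rcoeff_add_single (h : IsQuasiPeriod M τ ℏ U s e ψ) (hij : i ≠ j) (l : Fin n)
    (z : Fin n → ℂ) (a : ZMod M × ZMod M) :
    Rcoeff M τ ℏ a ((z + Pi.single l s : Fin n → ℂ) i - (z + Pi.single l s : Fin n → ℂ) j) *
        ((if i = l then ψ a else 1) * (if j = l then ψ (-a) else 1)) =
      (e ^ ((Pi.single l 1 : Fin n → ℤ) j - (Pi.single l 1 : Fin n → ℤ) i) : ℂˣ) *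
        Rcoeff M τ ℏ a (z i - z j) := by
  by_cases hi : i = l
  · subst hi
    have hψ : ψ (-a) * ψ a = 1 := by
      rw [← AddChar.map_add_eq_mul, neg_add_cancel, AddChar.map_zero_eq_one]
    have hadd := h.Rcoeff_add a (z i - z j)
    rw [sub_add_eq_add_sub] at hadd
    simp only [Pi.add_apply, Pi.single_eq_same, Pi.single_eq_of_ne hij.symm, add_zero, hadd,
      if_true, if_neg hij.symm, mul_one, zero_sub, _root_.zpow_neg_one]
    linear_combination (e⁻¹ : ℂˣ) * Rcoeff M τ ℏ a (z i - z j) * hψ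
  by_cases hj : j = l
  · subst hj
    have hadd := h.Rcoeff_add a (z i - (z j + s))
    rw [← sub_sub, sub_add_cancel, sub_sub] at hadd
    simp only [Pi.add_apply, Pi.single_eq_same, Pi.single_eq_of_ne hij, add_zero, hadd, if_true,
      if_neg hij, one_mul, sub_zero, zpow_one, ← mul_assoc, Units.mul_inv]
    ring
  · simp [hi, hj]

lemma IsQuasiPeriod.semiconjBy_Rz [NeZero M] (h : IsQuasiPeriod M τ ℏ U s e ψ) (hij : i ≠ j)
    (l : Fin n) (z : Fin n → ℂ) :
    SemiconjBy (opAt M U l) (Rz M τ ℏ (z + Pi.single l s) i j)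
      (e ^ ((Pi.single l 1 : Fin n → ℤ) j - (Pi.single l 1 : Fin n → ℤ) i) • Rz M τ ℏ z i j) := by
  rw [Rz, Rz, Rop_eq_sum M τ ℏ hij, Rop_eq_sum M τ ℏ hij, smul_comm _ (M : ℂ)⁻¹]
  refine (semiconjBy_sum_smul univ fun a _ => ?_).smul_right _
  have hT := ((semiconjBy_opAt (h.semiconjBy_Tmat a) l i).mul_right
    (semiconjBy_opAt (h.semiconjBy_Tmat (-a)) l j)).smul_right
      (Rcoeff M τ ℏ a ((z + Pi.single l s : Fin n → ℂ) i - (z + Pi.single l s : Fin n → ℂ) j))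
  rwa [smul_mul_smul_comm, smul_smul, h.Rcoeff_add_single hij, mul_smul, ← Units.smul_def] at hT

end QuasiPeriod

section IndexSets

lemma sum_sum_filter_lt_add_sum_sum_filter_gt {ι A : Type*} [LinearOrder ι] [AddCommMonoid A]
    {S T : Finset ι} (h : Disjoint S T) (w : ι → ι → A) :
    (∑ i ∈ S, ∑ j ∈ T.filter (fun j => i < j), w i j) +
        ∑ i ∈ S, ∑ j ∈ T.filter (fun j => j < i), w i j = ∑ i ∈ S, ∑ j ∈ T, w i j := by
  rw [← Finset.sum_add_distrib]
  refine Finset.sum_congr rfl fun i hi => ?_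
  rw [← Finset.sum_filter_add_sum_filter_not T (fun j => i < j)]
  refine congrArg _ (Finset.sum_congr (Finset.filter_congr fun j hj => ?_) fun _ _ => rfl)
  rw [not_lt, (Finset.disjoint_iff_ne.1 h i hi j hj).symm.le_iff_lt]

lemma sum_sum_sub {ι A : Type*} [Ring A] (S T : Finset ι) (q : ι → A) :
    ∑ i ∈ S, ∑ j ∈ T, (q j - q i) = #S * ∑ j ∈ T, q j - #T * ∑ i ∈ S, q i := by
  simp [Finset.sum_sub_distrib, Finset.mul_sum]

lemma filter_and_notMem {ι : Type*} [DecidableEq ι] (s t : Finset ι) (p : ι → Prop)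
    [DecidablePred p] : s.filter (fun i => p i ∧ i ∉ t) = (s \ t).filter p := by
  ext i
  simp only [Finset.mem_filter, Finset.mem_sdiff]
  tauto

lemma compl_N1set (N : ℕ) : (N1set N)ᶜ = N2set N := by
  ext i
  simp [N1set, N2set]

lemma card_N1set (N : ℕ) : #(N1set N) = N := by
  rw [N1set, Fin.card_filter_val_lt, min_eq_right (by lia)]

lemma card_N2set (N : ℕ) : #(N2set N) = N := by
  rw [← compl_N1set, Finset.card_compl, card_N1set, Fintype.card_fin, two_mul, Nat.add_sub_cancel]

lemma disjoint_N1set_N2set (N : ℕ) : Disjoint (N1set N) (N2set N) :=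
  compl_N1set N ▸ disjoint_compl_right

end IndexSets

section Charge

variable {M : ℕ} [NeZero M] {τ ℏ : ℂ}

/-- `U` intertwines each `R_ij` at the shifted positions with `e^{q_j − q_i} R_ij` at the original
ones. The integers `q` are charges of the tensor factors: they alone determine the power of `e`
acquired by a product of R-matrices. -/
def IntertwinesR (M : ℕ) [NeZero M] (τ ℏ : ℂ) {n : ℕ} (U : Matrix (Fin n → Fin M) (Fin n → Fin M) ℂ)
    (e : ℂˣ) (q : Fin n → ℤ) (z' z : Fin n → ℂ) : Prop :=
  ∀ ⦃i j⦄, i ≠ j → SemiconjBy U (Rz M τ ℏ z' i j) (e ^ (q j - q i) • Rz M τ ℏ z i j)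

namespace IntertwinesR

section Blocks

variable {n : ℕ} {U : Matrix (Fin n → Fin M) (Fin n → Fin M) ℂ} {e : ℂˣ} {q : Fin n → ℤ}
  {z' z : Fin n → ℂ} {I J : Finset (Fin n)}

lemma semiconjBy_calR (h : IntertwinesR M τ ℏ U e q z' z) (I J : Finset (Fin n)) :
    SemiconjBy U (calR M τ ℏ z' I J)
      (e ^ (∑ i ∈ I, ∑ j ∈ J.filter (fun j => i < j), (q j - q i)) • calR M τ ℏ z I J) :=
  semiconjBy_oprodDesc fun _ _ => semiconjBy_oprodAsc fun _ hj =>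
    h (Finset.mem_filter.1 hj).2.ne

lemma semiconjBy_calR' (h : IntertwinesR M τ ℏ U e q z' z) (I J : Finset (Fin n)) :
    SemiconjBy U (calR' M τ ℏ z' I J)
      (e ^ (∑ i ∈ I, ∑ j ∈ J.filter (fun j => j < i), (q j - q i)) • calR' M τ ℏ z I J) :=
  semiconjBy_oprodDesc fun _ _ => semiconjBy_oprodAsc fun _ hj =>
    h (Finset.mem_filter.1 hj).2.ne'

lemma semiconjBy_calY (h : IntertwinesR M τ ℏ U e q z' z) (hIJ : Disjoint I J) :
    SemiconjBy U (calY M τ ℏ z' I J)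
      (e ^ (∑ i ∈ I, ∑ j ∈ J, (q j - q i)) • calY M τ ℏ z I J) :=
  semiconjBy_oprodAsc fun _ hi => semiconjBy_oprodAsc fun _ hj =>
    h (Finset.disjoint_iff_ne.1 hIJ _ hi _ hj)

end Blocks

section Sums

variable {N : ℕ} {U : Matrix (Fin (2 * N) → Fin M) (Fin (2 * N) → Fin M) ℂ} {e : ℂˣ}
  {q : Fin (2 * N) → ℤ} {x' y' x y : Fin N → ℂ}

lemma semiconjBy_F1 (h : IntertwinesR M τ ℏ U e q (zfun N x' y') (zfun N x y)) (k : ℕ) :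
    SemiconjBy U (F1 M τ ℏ N k x' y')
      (e ^ (k * (∑ i ∈ N1set N, q i - ∑ j ∈ N2set N, q j)) • F1 M τ ℏ N k x y) := by
  refine semiconjBy_sum_smul _ fun S hS => ?_
  obtain ⟨hSN, rfl⟩ := Finset.mem_powersetCard.1 hS
  have hcard : (#(N1set N \ S) : ℤ) + #S = N := by
    exact_mod_cast (Finset.card_sdiff_add_card_eq_card hSN).trans (card_N1set N)
  have hweight : (∑ i ∈ S, ∑ j ∈ (N1set N \ S).filter (fun j => i < j), (q j - q i)) +
        (∑ j ∈ N2set N, ∑ i ∈ S, (q i - q j)) +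
        ∑ i ∈ S, ∑ j ∈ (N1set N \ S).filter (fun j => j < i), (q j - q i) =
      #S * (∑ i ∈ N1set N, q i - ∑ j ∈ N2set N, q j) := by
    rw [add_right_comm, sum_sum_filter_lt_add_sum_sum_filter_gt Finset.disjoint_sdiff, sum_sum_sub,
      sum_sum_sub, card_N2set, ← Finset.sum_sdiff hSN]
    linear_combination -(∑ i ∈ S, q i) * hcard
  rw [← hweight]
  exact semiconjBy_mul_zpow_smul (semiconjBy_mul_zpow_smul (h.semiconjBy_calR S _)
    (h.semiconjBy_calY ((disjoint_N1set_N2set N).symm.mono_right hSN))) (h.semiconjBy_calR' S _)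

lemma semiconjBy_F2 (h : IntertwinesR M τ ℏ U e q (zfun N x' y') (zfun N x y)) (k : ℕ) :
    SemiconjBy U (F2 M τ ℏ N k x' y')
      (e ^ (k * (∑ i ∈ N1set N, q i - ∑ j ∈ N2set N, q j)) • F2 M τ ℏ N k x y) := by
  refine semiconjBy_sum_smul _ fun S hS => ?_
  obtain ⟨hSN, rfl⟩ := Finset.mem_powersetCard.1 hS
  have hcard : (#(N2set N \ S) : ℤ) + #S = N := by
    exact_mod_cast (Finset.card_sdiff_add_card_eq_card hSN).trans (card_N2set N)
  have hweight : (∑ j ∈ S, ∑ l ∈ (N2set N \ S).filter (fun l => j < l), (q j - q l)) +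
        (∑ j ∈ S, ∑ i ∈ N1set N, (q i - q j)) +
        ∑ j ∈ S, ∑ l ∈ (N2set N \ S).filter (fun l => l < j), (q j - q l) =
      #S * (∑ i ∈ N1set N, q i - ∑ j ∈ N2set N, q j) := by
    rw [add_right_comm, sum_sum_filter_lt_add_sum_sum_filter_gt Finset.disjoint_sdiff,
      Finset.sum_comm, sum_sum_sub, sum_sum_sub, card_N1set, ← Finset.sum_sdiff hSN]
    linear_combination (∑ j ∈ S, q j) * hcard
  simp only [filter_and_notMem]
  rw [← hweight]
  refine semiconjBy_mul_zpow_smul (semiconjBy_mul_zpow_smul ?_ ?_) ?_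
  · exact semiconjBy_oprodDesc fun _ _ => semiconjBy_oprodAsc fun _ hl =>
      h (Finset.mem_filter.1 hl).2.ne'
  · exact h.semiconjBy_calY ((disjoint_N1set_N2set N).symm.mono_left hSN)
  · exact semiconjBy_oprodDesc fun _ _ => semiconjBy_oprodAsc fun _ hl =>
      h (Finset.mem_filter.1 hl).2.ne

end Sums

end IntertwinesR

end Charge

lemma zfun_update_add {N : ℕ} (x y : Fin N → ℂ) (a : Fin N) (t s : ℂ) :
    zfun N (Function.update x a (t + s)) y =
      zfun N (Function.update x a t) y + Pi.single (finN1 a) s := by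
  ext i
  by_cases hi : i = finN1 a
  · subst hi
    simp [zfun, finN1]
  · have hne (hlt : (i : ℕ) < N) : (⟨i, hlt⟩ : Fin N) ≠ a := by
      rintro rfl
      exact hi rfl
    simp only [zfun, Pi.add_apply, Pi.single_eq_of_ne hi, add_zero]
    split_ifs with hlt
    · rw [Function.update_of_ne (hne hlt), Function.update_of_ne (hne hlt)]
    · rfl

lemma eq_smul_inv_mul_mul {n R : Type*} [Fintype n] [DecidableEq n] [CommRing R]
    {U X X' : Matrix n n R} {c : R} (hU : IsUnit U) (h : SemiconjBy U X' (c • X)) :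
    X' = c • (U⁻¹ * X * U) := by
  rw [← Matrix.nonsing_inv_mul_cancel_left U X' ((Matrix.isUnit_iff_isUnit_det U).1 hU), h.eq,
    smul_mul_assoc, mul_smul_comm, mul_assoc]

lemma IsQuasiPeriod.F1_sub_F2_update_add {M : ℕ} [NeZero M] {τ ℏ : ℂ} {U : Matrix (Fin M) (Fin M) ℂ}
    {s : ℂ} {e : ℂˣ} {ψ : AddChar (ZMod M × ZMod M) ℂ} (h : IsQuasiPeriod M τ ℏ U s e ψ)
    {N : ℕ} (a : Fin N) (x y : Fin N → ℂ) (k : ℕ) (t : ℂ) :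
    F1 M τ ℏ N k (Function.update x a (t + s)) y - F2 M τ ℏ N k (Function.update x a (t + s)) y =
      (e : ℂ) ^ k • ((opAt M U (finN1 a))⁻¹ *
        (F1 M τ ℏ N k (Function.update x a t) y - F2 M τ ℏ N k (Function.update x a t) y) *
        opAt M U (finN1 a)) := by
  have hR : IntertwinesR M τ ℏ (opAt M U (finN1 a)) e (Pi.single (finN1 a) 1)
      (zfun N (Function.update x a (t + s)) y) (zfun N (Function.update x a t) y) :=
    fun i j hij => zfun_update_add x y a t s ▸ h.semiconjBy_Rz hij (finN1 a) _
  have hcharge : ∑ i ∈ N1set N, (Pi.single (finN1 a) 1 : Fin (2 * N) → ℤ) i -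
      ∑ j ∈ N2set N, (Pi.single (finN1 a) 1 : Fin (2 * N) → ℤ) j = 1 := by
    simp [Finset.sum_pi_single', N1set, N2set, finN1]
  have hF := (hR.semiconjBy_F1 k).sub_right (hR.semiconjBy_F2 k)
  rw [hcharge, mul_one, _root_.zpow_natCast, ← smul_sub, Units.smul_def,
    Units.val_pow_eq_pow_val] at hF
  exact eq_smul_inv_mul_mul (isUnit_opAt h.isUnit _) hF

theorem quasi_periodicity_of_F_general
    (M : ℕ) [NeZero M] (τ ℏ : ℂ) (_hτ : 0 < τ.im)
    (N : ℕ) (a : Fin N) (x y : Fin N → ℂ) (k : ℕ)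
    (_hdef : ∀ c : ZMod M × ZMod M, ℏ / M + omegaA M τ c ∉ lat τ)
    (_hz : ∀ i j : Fin (2 * N), i ≠ j → i ≠ finN1 a → j ≠ finN1 a →
      zfun N x y i - zfun N x y j ∉ lat τ)
    (t : ℂ) :
    (F1 M τ ℏ N k (Function.update x a (t + 1)) y - F2 M τ ℏ N k (Function.update x a (t + 1)) y =
      (opAt M (Qmat M) (finN1 a))⁻¹ *
        (F1 M τ ℏ N k (Function.update x a t) y - F2 M τ ℏ N k (Function.update x a t) y) *
        opAt M (Qmat M) (finN1 a)) ∧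
    (F1 M τ ℏ N k (Function.update x a (t + τ)) y - F2 M τ ℏ N k (Function.update x a (t + τ)) y =
      exp (2 * π * I * k * ℏ / M) •
        ((opAt M (Lmat M) (finN1 a))⁻¹ *
          (F1 M τ ℏ N k (Function.update x a t) y - F2 M τ ℏ N k (Function.update x a t) y) *
          opAt M (Lmat M) (finN1 a))) := by
  have hexp : exp (2 * π * I * k * ℏ / M) = exp (2 * π * I * ℏ / M) ^ k := by
    rw [← exp_nat_mul]
    ring_nf
  have hQ := (isQuasiPeriod_Qmat M τ ℏ).F1_sub_F2_update_add a x y k t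
  rw [Units.val_one, one_pow, one_smul] at hQ
  exact ⟨hQ, hexp ▸ (isQuasiPeriod_Lmat M τ ℏ).F1_sub_F2_update_add a x y k t⟩

/-- Quasi-periodicity of `𝓕[k,N]` in `z₁ = x₁` (relations (3.14)):
`𝓕(z₁+1) = Q₁^{−1} 𝓕(z₁) Q₁` and `𝓕(z₁+τ) = exp(2πi kℏ/M) Λ₁^{−1} 𝓕(z₁) Λ₁`. -/
theorem quasi_periodicity_of_F
    (M : ℕ) [NeZero M] (τ ℏ : ℂ) (hτ : 0 < τ.im)
    (N : ℕ) (hN : 1 ≤ N) (x y : Fin N → ℂ) (k : ℕ) (hk1 : 1 ≤ k) (hkN : k ≤ N)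
    (hℏ : ℏ ∉ lat τ)
    (hdef : ∀ c : ZMod M × ZMod M, ℏ / M + omegaA M τ c ∉ lat τ)
    (hz : ∀ i j : Fin (2*N), i ≠ j → i ≠ finN1 (⟨0, hN⟩ : Fin N) →
      j ≠ finN1 (⟨0, hN⟩ : Fin N) → zfun N x y i - zfun N x y j ∉ lat τ)
    (t : ℂ) :
    (F1 M τ ℏ N k (Function.update x ⟨0, hN⟩ (t + 1)) y -
        F2 M τ ℏ N k (Function.update x ⟨0, hN⟩ (t + 1)) y =
      (opAt M (Qmat M) (finN1 (⟨0, hN⟩ : Fin N)))⁻¹ *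
        (F1 M τ ℏ N k (Function.update x ⟨0, hN⟩ t) y -
          F2 M τ ℏ N k (Function.update x ⟨0, hN⟩ t) y) *
        opAt M (Qmat M) (finN1 (⟨0, hN⟩ : Fin N))) ∧
    (F1 M τ ℏ N k (Function.update x ⟨0, hN⟩ (t + τ)) y -
        F2 M τ ℏ N k (Function.update x ⟨0, hN⟩ (t + τ)) y =
      Complex.exp (2 * (Real.pi : ℂ) * Complex.I * k * ℏ / M) •
        ((opAt M (Lmat M) (finN1 (⟨0, hN⟩ : Fin N)))⁻¹ *
          (F1 M τ ℏ N k (Function.update x ⟨0, hN⟩ t) y -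
            F2 M τ ℏ N k (Function.update x ⟨0, hN⟩ t) y) *
          opAt M (Lmat M) (finN1 (⟨0, hN⟩ : Fin N)))) :=
  quasi_periodicity_of_F_general M τ ℏ hτ N ⟨0, hN⟩ x y k hdef hz t

end
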